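/- Let q be an odd prime power. For integers 0 ≤ i ≤ n and 0 ≤ t ≤ n: binom(t,i)_q = Σ_{a=0}^{n−t} (−1)^a · q^{a(t+1−i) + a(a−1)/2} · binom(n−t,a)_q · binom(n−a,i−a)_q. -/

import Mathlib

/-!
The identity is proved for every rational `q > 1` and every `i`, with `n = t + m`, by induction on
`m`. Write `F(m, t, i)` for the right-hand side. The Pascal rule
`binom(m+1,a) = q^a binom(m,a) + binom(m,a-1)` (`qbinom_succ_succ`) splits `F(m+1, t, i)` into
`F(m, t+1, i) - q^(t+1-i) F(m, t, i-1)`, which by the induction hypothesis equals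
`binom(t+1,i) - q^(t+1-i) binom(t,i-1)`. The other Pascal rule (`qbinom_succ_succ'`) says that this
is `binom(t,i)`.
-/

/-- The Gaussian binomial coefficient `binom(n,i)_q = ∏_{ℓ=0}^{i−1} (q^{n−ℓ}−1)/(q^{i−ℓ}−1)`
(which vanishes when `i > n`). -/
noncomputable def qbinom (q : ℚ) (n i : ℕ) : ℚ :=
  ∏ ℓ ∈ Finset.range i, (q ^ (n - ℓ) - 1) / (q ^ (i - ℓ) - 1)

lemma qbinom_zero_right (q : ℚ) (n : ℕ) : qbinom q n 0 = 1 := by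
  simp [qbinom]

lemma qbinom_eq_zero (q : ℚ) {n k : ℕ} (h : n < k) : qbinom q n k = 0 :=
  Finset.prod_eq_zero (Finset.mem_range.2 h) (by simp)

lemma pow_succ_sub_one_ne_zero {q : ℚ} (hq : 1 < q) (k : ℕ) : q ^ (k + 1) - 1 ≠ 0 :=
  (sub_pos.2 (one_lt_pow₀ hq (Nat.succ_ne_zero k))).ne'

/-- The absorption rule for Gaussian binomials. -/
lemma qbinom_absorb {q : ℚ} (hq : 1 < q) (n k : ℕ) :
    qbinom q (n + 1) (k + 1) * (q ^ (k + 1) - 1) = (q ^ (n + 1) - 1) * qbinom q n k := by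
  have h := pow_succ_sub_one_ne_zero hq k
  unfold qbinom
  rw [Finset.prod_range_succ']
  simp only [Nat.add_sub_add_right, Nat.sub_zero]
  field_simp

/-- The ratio of consecutive Gaussian binomials; for `k > n` both sides vanish. -/
lemma qbinom_succ_right {q : ℚ} (hq : 1 < q) (n k : ℕ) :
    qbinom q n (k + 1) * (q ^ (k + 1) - 1) = qbinom q n k * (q ^ (n - k) - 1) := by
  induction k generalizing n with
  | zero =>
    have h := pow_succ_sub_one_ne_zero hq 0
    simp only [qbinom, zero_add, pow_one] at h ⊢
    simp [h]
  | succ k ih =>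
    cases n with
    | zero => simp [qbinom_eq_zero]
    | succ n =>
      have h := pow_succ_sub_one_ne_zero hq k
      rw [qbinom_absorb hq, Nat.add_sub_add_right]
      apply mul_right_cancel₀ h
      linear_combination (q ^ (n + 1) - 1) * ih n - (q ^ (n - k) - 1) * qbinom_absorb hq n k

lemma qbinom_succ_succ {q : ℚ} (hq : 1 < q) (n k : ℕ) :
    qbinom q (n + 1) (k + 1) = q ^ (k + 1) * qbinom q n (k + 1) + qbinom q n k := by
  rcases lt_or_ge n k with h | h
  · simp [qbinom_eq_zero q h, qbinom_eq_zero q (show n < k + 1 by omega),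
      qbinom_eq_zero q (show n + 1 < k + 1 by omega)]
  · apply mul_right_cancel₀ (pow_succ_sub_one_ne_zero hq k)
    have e : q ^ (n + 1) = q ^ (k + 1) * q ^ (n - k) := by rw [← pow_add]; congr 1; omega
    linear_combination qbinom_absorb hq n k - q ^ (k + 1) * qbinom_succ_right hq n k
      + qbinom q n k * e

/-- The second Pascal rule, with an integer exponent so that it also holds for `k > n`. -/
lemma qbinom_succ_succ' {q : ℚ} (hq : 1 < q) (n k : ℕ) :
    qbinom q (n + 1) (k + 1) = qbinom q n (k + 1) + q ^ ((n : ℤ) - k) * qbinom q n k := by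
  rcases lt_or_ge n k with h | h
  · simp [qbinom_eq_zero q h, qbinom_eq_zero q (show n < k + 1 by omega),
      qbinom_eq_zero q (show n + 1 < k + 1 by omega)]
  · apply mul_right_cancel₀ (pow_succ_sub_one_ne_zero hq k)
    have e : q ^ (n + 1) = q ^ (k + 1) * q ^ (n - k) := by rw [← pow_add]; congr 1; omega
    rw [← Nat.cast_sub h, zpow_natCast]
    linear_combination qbinom_absorb hq n k - qbinom_succ_right hq n k
      + qbinom q n k * e

/-- The `a`-th term of the alternating sum, with `n = t + m`. -/
noncomputable def altTerm (q : ℚ) (m t i a : ℕ) : ℚ :=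
  (-1 : ℚ) ^ a * q ^ ((a : ℤ) * ((t : ℤ) + 1 - (i : ℤ))) * q ^ (a * (a - 1) / 2) *
    qbinom q m a * (if a ≤ i then qbinom q (t + m - a) (i - a) else 0)

lemma altTerm_zero (q : ℚ) (m t i : ℕ) : altTerm q m t i 0 = qbinom q (t + m) i := by
  simp [altTerm, qbinom_zero_right]

lemma altTerm_eq_zero (q : ℚ) {m a : ℕ} (t i : ℕ) (h : m < a) : altTerm q m t i a = 0 := by
  simp [altTerm, qbinom_eq_zero q h]

/-- The effect on a single term of the Pascal rule applied to `binom(m+1,a+1)`. -/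
lemma altTerm_succ {q : ℚ} (hq : 1 < q) (m t i a : ℕ) :
    altTerm q (m + 1) t (i + 1) (a + 1) =
      altTerm q m (t + 1) (i + 1) (a + 1) - q ^ ((t : ℤ) - i) * altTerm q m t i a := by
  have hq0 : q ≠ 0 := by positivity
  unfold altTerm
  rw [qbinom_succ_succ hq, Nat.triangle_succ]
  by_cases h : a ≤ i
  · have e1 : q ^ (((a + 1 : ℕ) : ℤ) * (((t + 1 : ℕ) : ℤ) + 1 - ((i + 1 : ℕ) : ℤ))) =
        q ^ (((a + 1 : ℕ) : ℤ) * ((t : ℤ) + 1 - ((i + 1 : ℕ) : ℤ))) * q ^ (a + 1) := by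
      rw [← zpow_natCast q (a + 1), ← zpow_add₀ hq0]
      congr 1; push_cast; ring
    have e2 : q ^ ((t : ℤ) - i) * q ^ ((a : ℤ) * ((t : ℤ) + 1 - (i : ℤ))) =
        q ^ (((a + 1 : ℕ) : ℤ) * ((t : ℤ) + 1 - ((i + 1 : ℕ) : ℤ))) * q ^ a := by
      rw [← zpow_natCast q a, ← zpow_add₀ hq0, ← zpow_add₀ hq0]
      congr 1; push_cast; ring
    rw [e1, if_pos h, if_pos (by omega), if_pos (by omega),
      show t + (m + 1) - (a + 1) = t + m - a by omega,
      show t + 1 + m - (a + 1) = t + m - a by omega, Nat.add_sub_add_right]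
    linear_combination (-1) ^ a * q ^ (a * (a - 1) / 2) * qbinom q m a *
      qbinom q (t + m - a) (i - a) * e2
  · simp [h]

lemma sum_altTerm {q : ℚ} (hq : 1 < q) (m t i : ℕ) :
    ∑ a ∈ Finset.range (m + 1), altTerm q m t i a = qbinom q t i := by
  induction m generalizing t i with
  | zero => simp [altTerm_zero]
  | succ m ih =>
    cases i with
    | zero =>
      -- Only the term `a = 0` survives.
      rw [Finset.sum_range_succ', altTerm_zero, qbinom_zero_right, qbinom_zero_right]
      simp [altTerm]
    | succ i =>
      have h0 : altTerm q (m + 1) t (i + 1) 0 = altTerm q m (t + 1) (i + 1) 0 := by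
        rw [altTerm_zero, altTerm_zero, show t + (m + 1) = t + 1 + m by omega]
      rw [Finset.sum_range_succ', h0]
      simp only [altTerm_succ hq]
      have h1 := Finset.sum_range_succ' (altTerm q m (t + 1) (i + 1)) (m + 1)
      rw [Finset.sum_range_succ, ih, altTerm_eq_zero q _ _ (Nat.lt_succ_self m)] at h1
      rw [Finset.sum_sub_distrib, ← Finset.mul_sum, ih]
      linear_combination qbinom_succ_succ' hq t i - h1

/-- for an odd prime power `q` and integers `0 ≤ i ≤ n`, `0 ≤ t ≤ n`:
`binom(t,i)_q = Σ_{a=0}^{n−t} (−1)^a q^{a(t+1−i)+a(a−1)/2} binom(n−t,a)_q binom(n−a,i−a)_q`,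
with the convention that `binom(n−a,i−a)_q = 0` when `a > i`. -/
theorem statement9 (q : ℕ) (hq : IsPrimePow q) (hodd : Odd q)
    (n i t : ℕ) (hi : i ≤ n) (ht : t ≤ n) :
    qbinom (q : ℚ) t i =
      ∑ a ∈ Finset.range (n - t + 1),
        (-1 : ℚ) ^ a * (q : ℚ) ^ ((a : ℤ) * ((t : ℤ) + 1 - (i : ℤ))) *
          (q : ℚ) ^ (a * (a - 1) / 2) * qbinom (q : ℚ) (n - t) a *
          (if a ≤ i then qbinom (q : ℚ) (n - a) (i - a) else 0) := by
  have hq1 : (1 : ℚ) < q := by exact_mod_cast hq.one_lt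
  obtain ⟨m, rfl⟩ := Nat.exists_eq_add_of_le ht
  rw [Nat.add_sub_cancel_left]
  exact (sum_altTerm hq1 m t i).symm
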